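/- For every K ∈ T^d, the essential spectrum of the operator matrix H(K) coincides with the spectrum of the channel operator H_ch(K) and equals Σ_K: σ_ess(H(K)) = σ(H_ch(K)) = Σ_K = [m_K, M_K] ∪ Λ_K. -/

import Mathlib

open MeasureTheory Complex Filter Topology Set

noncomputable section

instance fact2pi : Fact (0 < 2 * Real.pi) := ⟨by positivity⟩

/-- The d-dimensional torus `(-π, π]^d` with its Haar (Lebesgue) measure. -/
abbrev Td (d : ℕ) : Type := Fin d → AddCircle (2 * Real.pi)

/-- The Hilbert space `L²(T^d)`. -/
abbrev L2 (d : ℕ) := Lp ℂ 2 (volume : Measure (Td d))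

/-- The Hilbert space `L²((T^d)²)`. -/
abbrev L2two (d : ℕ) := Lp ℂ 2 (volume : Measure (Td d × Td d))

/-- The swap map on `L²((T^d)²)`, `(S f)(p,q) = f(q,p)`. -/
def swapL (d : ℕ) : L2two d →ₗ[ℂ] L2two d :=
  Lp.compMeasurePreservingₗ ℂ Prod.swap MeasureTheory.Measure.measurePreserving_swap

/-- The subspace `L²_sym((T^d)²)` of symmetric functions, as the fixed-point space of swap. -/
def symSub (d : ℕ) : Submodule ℂ (L2two d) := LinearMap.ker (swapL d - LinearMap.id)

abbrev L2sym (d : ℕ) := ↥(symSub d)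

instance (d : ℕ) : CompleteSpace (L2sym d) := by
  have hiso : Isometry (swapL d) :=
    Lp.isometry_compMeasurePreserving MeasureTheory.Measure.measurePreserving_swap
  have hcl : IsClosed ((symSub d : Set (L2two d))) := by
    have h1 : (symSub d : Set (L2two d)) = {f | swapL d f = f} := by
      ext f
      simp [symSub, LinearMap.mem_ker, sub_eq_zero, LinearMap.sub_apply]
    rw [h1]
    exact isClosed_eq hiso.continuous continuous_id
  exact hcl.completeSpace_coe

/-- The Hilbert space `H = ℂ ⊕ L²(T^d) ⊕ L²_sym((T^d)²)`. -/
abbrev H3 (d : ℕ) := WithLp 2 (ℂ × WithLp 2 (L2 d × L2sym d))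

/-- The zero-particle component. -/
def p0 {d : ℕ} (f : H3 d) : ℂ := (WithLp.equiv 2 _ f).1

/-- The one-particle component. -/
def p1 {d : ℕ} (f : H3 d) : L2 d := (WithLp.equiv 2 _ ((WithLp.equiv 2 _ f).2)).1

/-- The two-particle component, as an element of `L²((T^d)²)`. -/
def p2 {d : ℕ} (f : H3 d) : L2two d :=
  ((WithLp.equiv 2 _ ((WithLp.equiv 2 _ f).2)).2 : L2sym d)

/-- The Hilbert space `L²(T^d) ⊕ L²((T^d)²)` on which the channel operator acts. -/
abbrev HchSp (d : ℕ) := WithLp 2 (L2 d × L2two d)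

def c1 {d : ℕ} (f : HchSp d) : L2 d := (WithLp.equiv 2 _ f).1

def c2 {d : ℕ} (f : HchSp d) : L2two d := (WithLp.equiv 2 _ f).2

/-- The essential spectrum of a bounded operator on a Hilbert space, via the Weyl criterion:
`λ ∈ σ_ess(A)` iff there is an orthonormal (singular) sequence `u` with `‖(A - λ)uₙ‖ → 0`. -/
def essSpec {H' : Type*} [NormedAddCommGroup H'] [InnerProductSpace ℂ H']
    (A : H' →L[ℂ] H') : Set ℂ :=
  {l | ∃ u : ℕ → H', Orthonormal ℂ u ∧
        Tendsto (fun n => ‖A (u n) - l • u n‖) atTop (𝓝 0)}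

variable {d : ℕ}

/-- `E_min(K,k) = min_q w₂(K; k, q)`. -/
def Emin (w₂ : Td d → Td d → Td d → ℝ) (K k : Td d) : ℝ := ⨅ q, w₂ K k q

/-- `E_max(K,k) = max_q w₂(K; k, q)`. -/
def Emax (w₂ : Td d → Td d → Td d → ℝ) (K k : Td d) : ℝ := ⨆ q, w₂ K k q

/-- `m_K = min_{p,q} w₂(K; p, q)`. -/
def mK (w₂ : Td d → Td d → Td d → ℝ) (K : Td d) : ℝ := ⨅ x : Td d × Td d, w₂ K x.1 x.2

/-- `M_K = max_{p,q} w₂(K; p, q)`. -/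
def MK (w₂ : Td d → Td d → Td d → ℝ) (K : Td d) : ℝ := ⨆ x : Td d × Td d, w₂ K x.1 x.2

/-- The Fredholm determinant
`Δ_K(k; z) = w₁(K,k) − z − (1/2) ∫ v₁(t)² / (w₂(K;k,t) − z) dt`. -/
def Delta (v₁ : Td d → ℝ) (w₁ : Td d → Td d → ℝ) (w₂ : Td d → Td d → Td d → ℝ)
    (K k : Td d) (z : ℂ) : ℂ :=
  (w₁ K k : ℂ) - z - (1 / 2) * ∫ t, (v₁ t : ℂ) ^ 2 / ((w₂ K k t : ℂ) - z)

/-- The interval `[E_min(K,k), E_max(K,k)]`, viewed inside `ℂ`. -/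
def bandKk (w₂ : Td d → Td d → Td d → ℝ) (K k : Td d) : Set ℂ :=
  Complex.ofReal '' Set.Icc (Emin w₂ K k) (Emax w₂ K k)

/-- The interval `[m_K, M_K]`, viewed inside `ℂ`. -/
def bigBand (w₂ : Td d → Td d → Td d → ℝ) (K : Td d) : Set ℂ :=
  Complex.ofReal '' Set.Icc (mK w₂ K) (MK w₂ K)

/-- The two-particle branch
`Λ_K = {z : ∃ k, z ∉ [E_min(K,k), E_max(K,k)] ∧ Δ_K(k; z) = 0}`. -/
def LamK (v₁ : Td d → ℝ) (w₁ : Td d → Td d → ℝ) (w₂ : Td d → Td d → Td d → ℝ)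
    (K : Td d) : Set ℂ :=
  {z | ∃ k, z ∉ bandKk w₂ K k ∧ Delta v₁ w₁ w₂ K k z = 0}

/-- `Σ_K = [m_K, M_K] ∪ Λ_K`. -/
def SigK (v₁ : Td d → ℝ) (w₁ : Td d → Td d → ℝ) (w₂ : Td d → Td d → Td d → ℝ)
    (K : Td d) : Set ℂ :=
  bigBand w₂ K ∪ LamK v₁ w₁ w₂ K

/-- The defining equations of the `3×3` operator matrix `H(K)` acting on
`ℂ ⊕ L²(T^d) ⊕ L²_sym((T^d)²)`:
`(H f)₀ = w₀(K) f₀ + ∫ v₀(t) f₁(t) dt`,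
`(H f)₁(p) = v₀(p) f₀ + w₁(K; p) f₁(p) + ∫ v₁(t) f₂(p,t) dt`,
`(H f)₂(p,q) = (1/2)(v₁(p) f₁(q) + v₁(q) f₁(p)) + w₂(K; p,q) f₂(p,q)`. -/
def IsHamiltonian {d : ℕ} (w₀ v₀ v₁ : Td d → ℝ) (w₁ : Td d → Td d → ℝ)
    (w₂ : Td d → Td d → Td d → ℝ) (K : Td d) (H : H3 d →L[ℂ] H3 d) : Prop :=
  ∀ f : H3 d,
    (p0 (H f) = (w₀ K : ℂ) * p0 f + (∫ t, (v₀ t : ℂ) * (p1 f) t)) ∧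
    (⇑(p1 (H f)) =ᵐ[volume] fun p =>
        (v₀ p : ℂ) * p0 f + (w₁ K p : ℂ) * (p1 f) p +
          (∫ t, (v₁ t : ℂ) * (p2 f) (p, t))) ∧
    (⇑(p2 (H f)) =ᵐ[volume] fun x : Td d × Td d =>
        ((v₁ x.1 : ℂ) * (p1 f) x.2 + (v₁ x.2 : ℂ) * (p1 f) x.1) / 2 +
          (w₂ K x.1 x.2 : ℂ) * (p2 f) x)

/-- The defining equations of the channel operator `H_ch(K)` acting on
`L²(T^d) ⊕ L²((T^d)²)`:
`(H_ch f)₁(p) = w₁(K; p) f₁(p) + (1/√2) ∫ v₁(t) f₂(p,t) dt`,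
`(H_ch f)₂(p,q) = (1/√2) v₁(q) f₁(p) + w₂(K; p,q) f₂(p,q)`. -/
def IsChannel {d : ℕ} (v₁ : Td d → ℝ) (w₁ : Td d → Td d → ℝ)
    (w₂ : Td d → Td d → Td d → ℝ) (K : Td d) (Hc : HchSp d →L[ℂ] HchSp d) : Prop :=
  ∀ f : HchSp d,
    (⇑(c1 (Hc f)) =ᵐ[volume] fun p =>
        (w₁ K p : ℂ) * (c1 f) p +
          (Real.sqrt 2 : ℂ)⁻¹ * (∫ t, (v₁ t : ℂ) * (c2 f) (p, t))) ∧
    (⇑(c2 (Hc f)) =ᵐ[volume] fun x : Td d × Td d =>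
        (Real.sqrt 2 : ℂ)⁻¹ * (v₁ x.2 : ℂ) * (c1 f) x.1 +
          (w₂ K x.1 x.2 : ℂ) * (c2 f) x)

/-!
A point `z` lies in the essential spectrum of `A` exactly when `A - z` fails to be upper
semi-Fredholm, a property insensitive to finite-dimensional summands and to completely continuous
perturbations. So the vacuum component of `H(K)` may be dropped. What is left, and likewise the
channel operator, is a `2 × 2` block operator whose lower right corner is multiplication by
`w₂(K; ·, ·) - z`. Tensor products of unit vectors concentrating at a zero of this symbol are
singular sequences for both operators, which yields the band `[m_K, M_K]`. Off the band the corner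
is invertible and the Schur complement of the channel operator is multiplication by `Δ_K(·; z)`; the
one of the Hamiltonian differs from it by the exchange term of the symmetrised creation operator,
which is completely continuous. Hence for both operators the only remaining condition is that
`Δ_K(·; z)` has no zero.
-/

/-! ### Weakly null sequences -/

section WeakConvergence

variable {E F : Type*} [NormedAddCommGroup E] [InnerProductSpace ℂ E]
  [NormedAddCommGroup F] [InnerProductSpace ℂ F]

/-- Weak convergence of a sequence to `0` in an inner product space. -/
def WeaklyNull (u : ℕ → E) : Prop :=
  ∀ x, Tendsto (fun n => inner ℂ x (u n)) atTop (𝓝 0)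

theorem weaklyNull_of_orthonormal {u : ℕ → E} (hu : Orthonormal ℂ u) : WeaklyNull u := fun x => by
  have h := (hu.inner_products_summable (x := x)).tendsto_atTop_zero.sqrt
  simpa [tendsto_zero_iff_norm_tendsto_zero, norm_inner_symm x] using h

namespace WeaklyNull

variable {u v : ℕ → E}

theorem add (hu : WeaklyNull u) (hv : WeaklyNull v) : WeaklyNull fun n => u n + v n := fun x => by
  simpa [inner_add_right] using (hu x).add (hv x)

theorem map [CompleteSpace E] [CompleteSpace F] (hu : WeaklyNull u) (A : E →L[ℂ] F) :
    WeaklyNull fun n => A (u n) := fun x => by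
  simpa only [A.adjoint_inner_left] using hu (A.adjoint x)

theorem exists_norm_le [CompleteSpace E] (hu : WeaklyNull u) : ∃ C, ∀ n, ‖u n‖ ≤ C := by
  have hbdd : ∀ x, ∃ C, ∀ n, ‖innerSL ℂ (u n) x‖ ≤ C := fun x => by
    obtain ⟨C, hC⟩ := (hu x).norm.bddAbove_range
    exact ⟨C, fun n => by simpa [norm_inner_symm] using hC ⟨n, rfl⟩⟩
  simpa only [innerSL_apply_norm] using banach_steinhaus hbdd

theorem tendsto_starProjection (hu : WeaklyNull u) (V : Submodule ℂ E) [FiniteDimensional ℂ V] :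
    Tendsto (fun n => V.starProjection (u n)) atTop (𝓝 0) := by
  simp only [(stdOrthonormalBasis ℂ V).starProjection_eq_sum_rankOne, sum_apply,
    InnerProductSpace.rankOne_apply]
  rw [← Finset.sum_eq_zero fun i _ => zero_smul ℂ (stdOrthonormalBasis ℂ V i : E)]
  exact tendsto_finsetSum _ fun i _ => (hu _).smul_const _

theorem tendsto_zero [FiniteDimensional ℂ E] (hu : WeaklyNull u) : Tendsto u atTop (𝓝 0) := by
  simpa only [Submodule.starProjection_top, ContinuousLinearMap.id_apply] using
    hu.tendsto_starProjection ⊤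

theorem exists_unit_mem_orthogonal (hu : WeaklyNull u) (hu0 : ¬Tendsto u atTop (𝓝 0))
    {A : E →L[ℂ] F} (hA : Tendsto (fun n => A (u n)) atTop (𝓝 0))
    (V : Submodule ℂ E) [FiniteDimensional ℂ V] {δ : ℝ} (hδ : 0 < δ) :
    ∃ y ∈ Vᗮ, ‖y‖ = 1 ∧ ‖A y‖ ≤ δ := by
  obtain ⟨ε, hε, hfreq⟩ : ∃ ε > 0, ∃ᶠ n in atTop, ε ≤ ‖u n‖ := by
    simpa [Metric.tendsto_nhds, Filter.Frequently] using hu0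
  have hP := hu.tendsto_starProjection V
  have hAP : Tendsto (fun n => A (u n - V.starProjection (u n))) atTop (𝓝 0) := by
    simpa using hA.sub ((A.continuous.tendsto 0).comp hP)
  obtain ⟨n, hn, hPn, hAn⟩ := (hfreq.and_eventually
    ((Metric.tendsto_nhds.1 hP (ε / 2) (by positivity)).and
      (Metric.tendsto_nhds.1 hAP (δ * (ε / 2)) (by positivity)))).exists
  rw [dist_zero_right] at hPn hAn
  set y := u n - V.starProjection (u n)
  have hy : ε / 2 ≤ ‖y‖ := by linarith [norm_sub_norm_le (u n) (V.starProjection (u n))]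
  have hy0 : ‖y‖ ≠ 0 := (half_pos hε |>.trans_le hy).ne'
  refine ⟨(‖y‖⁻¹ : ℂ) • y,
    Vᗮ.smul_mem _ (V.sub_starProjection_mem_orthogonal (u n)), ?_, ?_⟩
  · simp [norm_smul, hy0]
  · rw [map_smul, norm_smul, norm_inv, norm_real, norm_norm, inv_mul_le_iff₀ (by positivity),
      mul_comm]
    exact hAn.le.trans (by gcongr)

end WeaklyNull

end WeakConvergence

/-! ### Upper semi-Fredholm operators -/

section SemiFredholm

variable {E F G : Type*} [NormedAddCommGroup E] [InnerProductSpace ℂ E]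
  [NormedAddCommGroup F] [InnerProductSpace ℂ F] [NormedAddCommGroup G] [InnerProductSpace ℂ G]

/-- Complete continuity: weakly null sequences are mapped to norm-null ones. On a Hilbert space this
is compactness. -/
def IsCompletelyContinuous (A : E →L[ℂ] F) : Prop :=
  ∀ u, WeaklyNull u → Tendsto (fun n => A (u n)) atTop (𝓝 0)

/-- Upper semi-Fredholm operators, characterised sequentially: no weakly null sequence that stays
away from `0` is mapped to a norm-null one. On a Hilbert space this says that `A` has closed range
and finite-dimensional kernel. -/
def IsUpperSemiFredholm (A : E →L[ℂ] F) : Prop :=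
  ∀ u, WeaklyNull u → Tendsto (fun n => A (u n)) atTop (𝓝 0) → Tendsto u atTop (𝓝 0)

theorem IsCompletelyContinuous.neg {A : E →L[ℂ] F} (hA : IsCompletelyContinuous A) :
    IsCompletelyContinuous (-A) := fun u hu => by simpa using (hA u hu).neg

theorem IsUpperSemiFredholm.add {A B : E →L[ℂ] F} (hA : IsUpperSemiFredholm A)
    (hB : IsCompletelyContinuous B) : IsUpperSemiFredholm (A + B) := fun u hu h =>
  hA u hu (by simpa using h.sub (hB u hu))

theorem isUpperSemiFredholm_add_iff {A B : E →L[ℂ] F} (hB : IsCompletelyContinuous B) :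
    IsUpperSemiFredholm (A + B) ↔ IsUpperSemiFredholm A :=
  ⟨fun h => by simpa using h.add hB.neg, fun h => h.add hB⟩

theorem IsUpperSemiFredholm.of_comp {A : E →L[ℂ] F} {B : F →L[ℂ] G}
    (h : IsUpperSemiFredholm (B ∘L A)) : IsUpperSemiFredholm A := fun u hu hAu =>
  h u hu ((B.continuous.tendsto' 0 0 (map_zero B)).comp hAu)

theorem isUpperSemiFredholm_of_isUnit {U : E →L[ℂ] E} (hU : IsUnit U) : IsUpperSemiFredholm U := by
  obtain ⟨V, hV⟩ := hU.exists_left_inv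
  refine .of_comp (B := V) ?_
  rw [← ContinuousLinearMap.mul_def, hV]
  exact fun u _ hu => hu

theorem isUpperSemiFredholm_isUnit_mul_iff {U A : E →L[ℂ] E} (hU : IsUnit U) :
    IsUpperSemiFredholm (U * A) ↔ IsUpperSemiFredholm A := by
  obtain ⟨V, hV⟩ := hU.exists_left_inv
  refine ⟨.of_comp, fun h => .of_comp (B := V) ?_⟩
  rwa [← ContinuousLinearMap.mul_def, ← mul_assoc, hV, one_mul]

theorem IsUpperSemiFredholm.mul_isUnit [CompleteSpace E] {U A : E →L[ℂ] E}
    (h : IsUpperSemiFredholm A) (hU : IsUnit U) : IsUpperSemiFredholm (A * U) := fun u hu hAu =>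
  isUpperSemiFredholm_of_isUnit hU u hu (h _ (hu.map U) hAu)

theorem isUpperSemiFredholm_mul_isUnit_iff [CompleteSpace E] {U A : E →L[ℂ] E} (hU : IsUnit U) :
    IsUpperSemiFredholm (A * U) ↔ IsUpperSemiFredholm A := by
  refine ⟨fun h => ?_, fun h => h.mul_isUnit hU⟩
  obtain ⟨U, rfl⟩ := hU
  simpa [mul_assoc] using h.mul_isUnit U⁻¹.isUnit

theorem exists_orthonormal_of_forall_finiteDimensional {A : E →L[ℂ] F}
    (h : ∀ V : Submodule ℂ E, FiniteDimensional ℂ V → ∀ δ > 0, ∃ y ∈ Vᗮ, ‖y‖ = 1 ∧ ‖A y‖ ≤ δ) :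
    ∃ u : ℕ → E, Orthonormal ℂ u ∧ Tendsto (fun n => ‖A (u n)‖) atTop (𝓝 0) := by
  classical
  obtain ⟨f, hf, hrel⟩ := exists_seq_of_forall_finset_exists
    (fun x : ℕ × E => ‖x.2‖ = 1 ∧ ‖A x.2‖ ≤ 1 / ((x.1 : ℝ) + 1))
    (fun x y => x.1 < y.1 ∧ inner ℂ x.2 y.2 = 0) fun s _ => by
      let V := Submodule.span ℂ (s.image Prod.snd : Set E)
      obtain ⟨y, hyV, hy, hAy⟩ := h V inferInstance
        (1 / (((s.sup Prod.fst + 1 : ℕ) : ℝ) + 1)) (by positivity)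
      refine ⟨(s.sup Prod.fst + 1, y), ⟨hy, hAy⟩, fun x hx => ⟨?_, ?_⟩⟩
      · exact Nat.lt_succ_of_le (Finset.le_sup (f := Prod.fst) hx)
      · exact hyV _ (Submodule.subset_span (Finset.mem_image_of_mem _ hx))
  have hmono : StrictMono fun n => (f n).1 := fun m n hmn => (hrel m n hmn).1
  refine ⟨fun n => (f n).2, ⟨fun n => (hf n).1, fun m n hmn => ?_⟩, ?_⟩
  · rcases lt_or_gt_of_ne hmn with hlt | hgt
    · exact (hrel m n hlt).2
    · exact inner_eq_zero_symm.1 (hrel n m hgt).2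
  · exact squeeze_zero (fun _ => norm_nonneg _) (fun n => (hf n).2)
      (tendsto_one_div_add_atTop_nhds_zero_nat.comp hmono.tendsto_atTop)

theorem mem_essSpec_iff {A : E →L[ℂ] E} {z : ℂ} :
    z ∈ essSpec A ↔ ¬IsUpperSemiFredholm (A - algebraMap ℂ _ z) := by
  simp only [essSpec, mem_ofPred_eq, IsUpperSemiFredholm, not_forall, exists_prop]
  constructor
  · rintro ⟨u, hu, hAu⟩
    refine ⟨u, weaklyNull_of_orthonormal hu, tendsto_zero_iff_norm_tendsto_zero.2 hAu, fun h => ?_⟩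
    simpa [hu.1] using h.norm
  · rintro ⟨u, hu, hAu, hu0⟩
    exact exists_orthonormal_of_forall_finiteDimensional fun V _ _ hδ =>
      hu.exists_unit_mem_orthogonal hu0 hAu V hδ

end SemiFredholm

/-! ### Block operators on a Hilbert direct sum -/

section Block

variable {E F : Type*} [NormedAddCommGroup E] [InnerProductSpace ℂ E]
  [NormedAddCommGroup F] [InnerProductSpace ℂ F]

theorem WeaklyNull.fst {u : ℕ → WithLp 2 (E × F)} (hu : WeaklyNull u) :
    WeaklyNull fun n => (u n).fst := fun x => by
  simpa [WithLp.prod_inner_apply] using hu (WithLp.toLp 2 (x, 0))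

theorem WeaklyNull.snd {u : ℕ → WithLp 2 (E × F)} (hu : WeaklyNull u) :
    WeaklyNull fun n => (u n).snd := fun x => by
  simpa [WithLp.prod_inner_apply] using hu (WithLp.toLp 2 (0, x))

theorem WeaklyNull.toLp {u : ℕ → E} {v : ℕ → F} (hu : WeaklyNull u) (hv : WeaklyNull v) :
    WeaklyNull fun n => WithLp.toLp 2 (u n, v n) := fun x => by
  simpa [WithLp.prod_inner_apply] using (hu x.fst).add (hv x.snd)

theorem weaklyNull_zero : WeaklyNull fun _ => (0 : E) := fun x => by simp

theorem tendsto_withLp_prod_zero_iff {u : ℕ → WithLp 2 (E × F)} :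
    Tendsto u atTop (𝓝 0) ↔
      Tendsto (fun n => (u n).fst) atTop (𝓝 0) ∧ Tendsto (fun n => (u n).snd) atTop (𝓝 0) := by
  rw [(WithLp.prodContinuousLinearEquiv 2 ℂ E F).toHomeomorph.isInducing.tendsto_nhds_iff]
  exact Prod.tendsto_iff _ _

/-- The operator on the Hilbert direct sum of `E` and `F` with matrix `(A B; C D)`. -/
def blockOp (A : E →L[ℂ] E) (B : F →L[ℂ] E) (C : E →L[ℂ] F) (D : F →L[ℂ] F) :
    WithLp 2 (E × F) →L[ℂ] WithLp 2 (E × F) :=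
  ↑(WithLp.prodContinuousLinearEquiv 2 ℂ E F).symm ∘L
    (A.coprod B).prod (C.coprod D) ∘L ↑(WithLp.prodContinuousLinearEquiv 2 ℂ E F)

variable {A A' : E →L[ℂ] E} {B B' : F →L[ℂ] E} {C C' : E →L[ℂ] F} {D D' : F →L[ℂ] F}

theorem blockOp_apply (x : WithLp 2 (E × F)) :
    blockOp A B C D x = WithLp.toLp 2 (A x.fst + B x.snd, C x.fst + D x.snd) := rfl

theorem eq_of_fst_eq_of_snd_eq {S T : WithLp 2 (E × F) →L[ℂ] WithLp 2 (E × F)}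
    (hfst : ∀ x, (S x).fst = (T x).fst) (hsnd : ∀ x, (S x).snd = (T x).snd) : S = T :=
  ContinuousLinearMap.ext fun x => WithLp.ofLp_injective 2 (Prod.ext (hfst x) (hsnd x))

theorem blockOp_sub_algebraMap (z : ℂ) : blockOp A B C D - algebraMap ℂ _ z =
    blockOp (A - algebraMap ℂ _ z) B C (D - algebraMap ℂ _ z) := by
  apply eq_of_fst_eq_of_snd_eq <;> intro x <;>
    simp only [blockOp_apply, Algebra.algebraMap_eq_smul_one, sub_apply, smul_apply,
      WithLp.sub_fst, WithLp.smul_fst, WithLp.sub_snd, WithLp.smul_snd,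
      WithLp.toLp_fst, WithLp.toLp_snd] <;> abel

theorem isUnit_blockOp_upper (B : F →L[ℂ] E) : IsUnit (blockOp 1 B 0 1) :=
  isUnit_iff_exists.2 ⟨blockOp 1 (-B) 0 1,
    eq_of_fst_eq_of_snd_eq (by simp [blockOp_apply]) (by simp [blockOp_apply]),
    eq_of_fst_eq_of_snd_eq (by simp [blockOp_apply]) (by simp [blockOp_apply])⟩

theorem isUnit_blockOp_lower (C : E →L[ℂ] F) : IsUnit (blockOp 1 0 C 1) :=
  isUnit_iff_exists.2 ⟨blockOp 1 0 (-C) 1,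
    eq_of_fst_eq_of_snd_eq (by simp [blockOp_apply]) (by simp [blockOp_apply]),
    eq_of_fst_eq_of_snd_eq (by simp [blockOp_apply]) (by simp [blockOp_apply])⟩

theorem unit_inv_apply_apply (U : (F →L[ℂ] F)ˣ) (x : F) :
    (↑U⁻¹ : F →L[ℂ] F) ((U : F →L[ℂ] F) x) = x :=
  DFunLike.congr_fun U.inv_mul x

theorem unit_apply_inv_apply (U : (F →L[ℂ] F)ˣ) (x : F) :
    (U : F →L[ℂ] F) ((↑U⁻¹ : F →L[ℂ] F) x) = x :=
  DFunLike.congr_fun U.mul_inv x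

theorem isUnit_blockOp_diag (hA : IsUnit A) (hD : IsUnit D) : IsUnit (blockOp A 0 0 D) := by
  obtain ⟨U, rfl⟩ := hA
  obtain ⟨V, rfl⟩ := hD
  refine isUnit_iff_exists.2 ⟨blockOp ↑U⁻¹ 0 0 ↑V⁻¹, ?_, ?_⟩ <;> apply eq_of_fst_eq_of_snd_eq <;>
    simp [blockOp_apply, unit_inv_apply_apply, unit_apply_inv_apply]

theorem blockOp_eq_mul_schur (D : (F →L[ℂ] F)ˣ) : blockOp A B C ↑D =
    blockOp 1 (B ∘L ↑D⁻¹) 0 1 * blockOp (A - B ∘L ↑D⁻¹ ∘L C) 0 0 ↑D *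
      blockOp 1 0 (↑D⁻¹ ∘L C) 1 := by
  apply eq_of_fst_eq_of_snd_eq <;> intro x
  · simp [blockOp_apply, unit_inv_apply_apply, ← add_assoc]
  · simp [blockOp_apply, unit_apply_inv_apply]

theorem isUnit_blockOp_of_schur {D : (F →L[ℂ] F)ˣ} (h : IsUnit (A - B ∘L ↑D⁻¹ ∘L C)) :
    IsUnit (blockOp A B C ↑D) := by
  rw [blockOp_eq_mul_schur]
  exact ((isUnit_blockOp_upper _).mul (isUnit_blockOp_diag h D.isUnit)).mul (isUnit_blockOp_lower _)

theorem isUpperSemiFredholm_blockOp_diag_iff (hD : IsUnit D) :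
    IsUpperSemiFredholm (blockOp A 0 0 D) ↔ IsUpperSemiFredholm A := by
  simp only [IsUpperSemiFredholm, blockOp_apply, tendsto_withLp_prod_zero_iff, WithLp.toLp_fst,
    WithLp.toLp_snd, zero_apply, add_zero, zero_add]
  refine ⟨fun h u hu hAu => ?_, fun h u hu hu0 => ⟨h _ hu.fst hu0.1, ?_⟩⟩
  · exact (h _ (hu.toLp weaklyNull_zero) ⟨hAu, by simp⟩).1
  · exact isUpperSemiFredholm_of_isUnit hD _ hu.snd hu0.2

theorem isUpperSemiFredholm_blockOp_iff_schur [CompleteSpace E] [CompleteSpace F]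
    {D : (F →L[ℂ] F)ˣ} :
    IsUpperSemiFredholm (blockOp A B C ↑D) ↔ IsUpperSemiFredholm (A - B ∘L ↑D⁻¹ ∘L C) := by
  rw [blockOp_eq_mul_schur, isUpperSemiFredholm_mul_isUnit_iff (isUnit_blockOp_lower _),
    isUpperSemiFredholm_isUnit_mul_iff (isUnit_blockOp_upper _),
    isUpperSemiFredholm_blockOp_diag_iff D.isUnit]

theorem not_isUpperSemiFredholm_blockOp {u : ℕ → F} (hu : WeaklyNull u)
    (hB : Tendsto (fun n => B (u n)) atTop (𝓝 0)) (hD : Tendsto (fun n => D (u n)) atTop (𝓝 0))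
    (hu0 : ¬Tendsto u atTop (𝓝 0)) : ¬IsUpperSemiFredholm (blockOp A B C D) := fun h =>
  hu0 (tendsto_withLp_prod_zero_iff.1 (h _ (weaklyNull_zero.toLp hu)
    (tendsto_withLp_prod_zero_iff.2 ⟨by simpa [blockOp_apply], by simpa [blockOp_apply]⟩))).2

/-- The compression of an operator on the Hilbert direct sum of `E` and `F` to the summand `F`. -/
def sndCompression (T : WithLp 2 (E × F) →L[ℂ] WithLp 2 (E × F)) : F →L[ℂ] F :=
  WithLp.sndL 2 ℂ E F ∘L T ∘L ↑(WithLp.prodContinuousLinearEquiv 2 ℂ E F).symm ∘L .inr ℂ E F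

theorem sndCompression_apply (T : WithLp 2 (E × F) →L[ℂ] WithLp 2 (E × F)) (x : F) :
    sndCompression T x = (T (WithLp.toLp 2 (0, x))).snd := rfl

theorem isUpperSemiFredholm_sndCompression_iff [FiniteDimensional ℂ E] [CompleteSpace F]
    {T : WithLp 2 (E × F) →L[ℂ] WithLp 2 (E × F)} :
    IsUpperSemiFredholm (sndCompression T) ↔ IsUpperSemiFredholm T := by
  have := FiniteDimensional.complete ℂ E
  refine ⟨fun h u hu hTu => ?_, fun h u hu hTu => ?_⟩
  · have hfst := hu.fst.tendsto_zero
    let Q := WithLp.sndL 2 ℂ E F ∘L T ∘L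
      ↑(WithLp.prodContinuousLinearEquiv 2 ℂ E F).symm ∘L .inl ℂ E F
    have hsplit (n : ℕ) : sndCompression T (u n).snd = (T (u n)).snd - Q (u n).fst := by
      have : u n = WithLp.toLp 2 ((u n).fst, 0) + WithLp.toLp 2 (0, (u n).snd) :=
        WithLp.ofLp_injective 2 (Prod.ext (by simp) (by simp))
      nth_rw 2 [this]
      simp [Q, sndCompression_apply]
    refine tendsto_withLp_prod_zero_iff.2 ⟨hfst, h _ hu.snd ?_⟩
    simpa [hsplit] using (tendsto_withLp_prod_zero_iff.1 hTu).2.sub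
      ((Q.continuous.tendsto 0).comp hfst)
  · have hinr := weaklyNull_zero.toLp (E := E) hu
    refine (tendsto_withLp_prod_zero_iff.1 (h _ hinr
      (tendsto_withLp_prod_zero_iff.2 ⟨(hinr.map T).fst.tendsto_zero, hTu⟩))).2

theorem essSpec_sndCompression [FiniteDimensional ℂ E] [CompleteSpace F]
    (T : WithLp 2 (E × F) →L[ℂ] WithLp 2 (E × F)) : essSpec (sndCompression T) = essSpec T := by
  have hsub (z : ℂ) :
      sndCompression T - algebraMap ℂ _ z = sndCompression (T - algebraMap ℂ _ z) := by
    ext x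
    simp [sndCompression_apply, Algebra.algebraMap_eq_smul_one]
  ext z
  rw [mem_essSpec_iff, mem_essSpec_iff, hsub, isUpperSemiFredholm_sndCompression_iff]

end Block

/-! ### Multiplication operators -/

section MulOp

theorem units_inv_apply {X : Type*} [TopologicalSpace X] (a : C(X, ℂ)ˣ) (x : X) :
    a⁻¹.val x = (a.val x)⁻¹ :=
  eq_inv_of_mul_eq_one_right (DFunLike.congr_fun a.mul_inv x)

variable {X : Type*} [TopologicalSpace X] [CompactSpace X] [MeasurableSpace X]
  [BorelSpace X] {μ : Measure X} [IsFiniteMeasure μ]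

theorem coeFn_holderL_toLp (a : C(X, ℂ)) (f : Lp ℂ 2 μ) :
    (ContinuousLinearMap.lsmul ℂ ℂ).holderL μ ⊤ 2 2 (a.toLp ⊤ μ ℂ) f =ᵐ[μ]
      fun x => a x * f x := by
  filter_upwards [(ContinuousLinearMap.lsmul ℂ ℂ).coeFn_holder (r := 2) (a.toLp ⊤ μ ℂ) f,
    a.coeFn_toLp (p := ⊤) (𝕜 := ℂ) μ] with x hx hax
  exact hx.trans (by rw [hax]; rfl)

variable (μ) in
/-- The representation of the continuous functions on `X` by multiplication operators on
`L²(X, μ)`. -/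
def mulOp : C(X, ℂ) →ₐ[ℂ] (Lp ℂ 2 μ →L[ℂ] Lp ℂ 2 μ) :=
  AlgHom.ofLinearMap
    (((ContinuousLinearMap.lsmul ℂ ℂ).holderL μ ⊤ 2 2).toLinearMap ∘ₗ
      (ContinuousMap.toLp ⊤ μ ℂ : C(X, ℂ) →L[ℂ] Lp ℂ ⊤ μ).toLinearMap)
    (ContinuousLinearMap.ext fun f => Lp.ext <| (coeFn_holderL_toLp 1 f).trans <| by simp)
    fun a b => ContinuousLinearMap.ext fun f => Lp.ext <| by
      filter_upwards [coeFn_holderL_toLp (a * b) f, coeFn_holderL_toLp b f, coeFn_holderL_toLp a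
        ((ContinuousLinearMap.lsmul ℂ ℂ).holderL μ ⊤ 2 2 (b.toLp ⊤ μ ℂ) f)] with x hab hb ha
      exact hab.trans (.trans (by rw [ContinuousMap.mul_apply, mul_assoc, ← hb]) ha.symm)

theorem coeFn_mulOp (a : C(X, ℂ)) (f : Lp ℂ 2 μ) : mulOp μ a f =ᵐ[μ] fun x => a x * f x :=
  coeFn_holderL_toLp a f

theorem continuous_mulOp : Continuous (mulOp μ : C(X, ℂ) → Lp ℂ 2 μ →L[ℂ] Lp ℂ 2 μ) :=
  (((ContinuousLinearMap.lsmul ℂ ℂ).holderL μ ⊤ 2 2).comp (ContinuousMap.toLp ⊤ μ ℂ)).continuous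

theorem isUnit_mulOp {a : C(X, ℂ)} (ha : ∀ x, a x ≠ 0) : IsUnit (mulOp μ a) :=
  ((ContinuousMap.isUnit_iff_forall_ne_zero a).2 ha).map (mulOp μ)

end MulOp

/-! ### Concentrating sequences -/

section Concentration

variable {X : Type*} [TopologicalSpace X] [MeasurableSpace X] {μ : Measure X}

/-- The unit vectors `f n` of `L²(X, μ)` concentrate at `x₀`: every neighbourhood of `x₀` eventually
supports them. -/
structure ConcentratesAt (f : ℕ → Lp ℂ 2 μ) (x₀ : X) : Prop where
  norm_eq_one : ∀ n, ‖f n‖ = 1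
  eventually_eq_zero : ∀ U ∈ 𝓝 x₀, ∀ᶠ n in atTop, ∀ᵐ x ∂μ, x ∉ U → f n x = 0

theorem exists_concentratesAt [FirstCountableTopology X] [BorelSpace X]
    [IsFiniteMeasure μ] [μ.IsOpenPosMeasure] (x₀ : X) :
    ∃ f : ℕ → Lp ℂ 2 μ, ConcentratesAt f x₀ := by
  obtain ⟨U, hU, hbasis⟩ := (nhds_basis_opens x₀).exists_antitone_subbasis
  let χ (n : ℕ) : Lp ℂ 2 μ :=
    indicatorConstLp 2 (hU n).2.measurableSet (measure_ne_top μ (U n)) 1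
  have hχ (n : ℕ) : ‖χ n‖ ≠ 0 := by
    have : 0 < μ.real (U n) := ENNReal.toReal_pos
      ((hU n).2.measure_pos μ ⟨x₀, (hU n).1⟩).ne' (measure_ne_top μ _)
    simp only [χ, norm_indicatorConstLp two_ne_zero ENNReal.ofNat_ne_top]
    exact mul_ne_zero (by simp) (Real.rpow_pos_of_pos this _).ne'
  refine ⟨fun n => (‖χ n‖⁻¹ : ℂ) • χ n, fun n => ?_, fun V hV => ?_⟩
  · simp [norm_smul, hχ n]
  · obtain ⟨m, hm⟩ := hbasis.mem_iff.1 hV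
    filter_upwards [eventually_ge_atTop m] with n hn
    filter_upwards [Lp.coeFn_smul (‖χ n‖⁻¹ : ℂ) (χ n),
      indicatorConstLp_coeFn_notMem (p := 2) (hs := (hU n).2.measurableSet)
        (hμs := measure_ne_top μ (U n)) (c := (1 : ℂ))] with x hsmul hx hxV
    rw [hsmul, Pi.smul_apply, hx fun hxU => hxV (hm (hbasis.antitone hn hxU)), smul_zero]

namespace ConcentratesAt

variable {f : ℕ → Lp ℂ 2 μ} {x₀ : X}

theorem not_tendsto_zero (hf : ConcentratesAt f x₀) : ¬Tendsto f atTop (𝓝 0) := fun h => by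
  simpa [hf.norm_eq_one] using h.norm

theorem weaklyNull [BorelSpace X] [μ.OuterRegular] (hf : ConcentratesAt f x₀)
    (hx₀ : μ {x₀} = 0) : WeaklyNull f := fun g => by
  refine Metric.tendsto_nhds.2 fun ε hε => ?_
  obtain ⟨δ, hδ, hg⟩ := (Lp.memLp g).eLpNorm_indicator_le one_le_two ENNReal.ofNat_ne_top
    (half_pos hε)
  obtain ⟨U, hxU, hU, hμU⟩ := Set.exists_isOpen_lt_of_lt (μ := μ) {x₀} (ENNReal.ofReal δ)
    (by rwa [hx₀, ENNReal.ofReal_pos])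
  have hgU := (Lp.memLp g).indicator hU.measurableSet
  have hnorm : ‖hgU.toLp‖ ≤ ε / 2 := by
    rw [Lp.norm_toLp]
    exact ENNReal.toReal_le_of_le_ofReal (half_pos hε).le (hg U hU.measurableSet hμU.le)
  filter_upwards [hf.eventually_eq_zero U (hU.mem_nhds (hxU rfl))] with n hn
  have hinner : inner ℂ g (f n) = inner ℂ hgU.toLp (f n) := by
    simp only [L2.inner_def]
    refine integral_congr_ae ?_
    filter_upwards [hn, hgU.coeFn_toLp] with x hx hgx
    by_cases hxU : x ∈ U
    · simp [hgx, hxU]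
    · simp [hx hxU]
  rw [hinner, dist_zero_right]
  calc ‖inner ℂ hgU.toLp (f n)‖ ≤ ‖hgU.toLp‖ * ‖f n‖ := norm_inner_le_norm _ _
    _ ≤ ε / 2 := by rwa [hf.norm_eq_one, mul_one]
    _ < ε := half_lt_self hε

theorem tendsto_mulOp [CompactSpace X] [BorelSpace X] [IsFiniteMeasure μ]
    (hf : ConcentratesAt f x₀) {a : C(X, ℂ)} (ha : a x₀ = 0) :
    Tendsto (fun n => mulOp μ a (f n)) atTop (𝓝 0) := by
  refine Metric.tendsto_nhds.2 fun ε hε => ?_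
  have hU : {x | ‖a x‖ < ε / 2} ∈ 𝓝 x₀ :=
    (a.continuous.norm.tendsto x₀).eventually_lt_const (by simpa [ha] using hε)
  filter_upwards [hf.eventually_eq_zero _ hU] with n hn
  rw [dist_zero_right]
  have hle : ∀ᵐ x ∂μ, ‖mulOp μ a (f n) x‖ ≤ ε / 2 * ‖f n x‖ := by
    filter_upwards [hn, coeFn_mulOp a (f n)] with x hx hax
    rw [hax, norm_mul]
    by_cases hxU : ‖a x‖ < ε / 2
    · gcongr
    · simp [hx hxU]
  calc ‖mulOp μ a (f n)‖ ≤ ε / 2 * ‖f n‖ := Lp.norm_le_mul_norm_of_ae_le_mul hle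
    _ < ε := by rw [hf.norm_eq_one]; linarith

end ConcentratesAt

theorem isUpperSemiFredholm_mulOp_iff [CompactSpace X] [FirstCountableTopology X]
    [BorelSpace X] [IsFiniteMeasure μ] [μ.IsOpenPosMeasure] [μ.OuterRegular]
    [NullSingletonClass μ] {a : C(X, ℂ)} :
    IsUpperSemiFredholm (mulOp μ a) ↔ ∀ x, a x ≠ 0 := by
  refine ⟨fun h x₀ hx₀ => ?_, fun h => isUpperSemiFredholm_of_isUnit (isUnit_mulOp h)⟩
  obtain ⟨f, hf⟩ := exists_concentratesAt (μ := μ) x₀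
  exact hf.not_tendsto_zero (h f (hf.weaklyNull (measure_singleton x₀)) (hf.tendsto_mulOp hx₀))

end Concentration

/-! ### Tensor products of square-integrable functions -/

section Tensor

variable {X Y : Type*} [MeasurableSpace X] [MeasurableSpace Y] {μ : Measure X} {ν : Measure Y}

theorem ae_fst {p : X → Prop} (h : ∀ᵐ x ∂μ, p x) : ∀ᵐ x ∂μ.prod ν, p x.1 :=
  Measure.quasiMeasurePreserving_fst.ae h

theorem ae_snd {p : Y → Prop} (h : ∀ᵐ y ∂ν, p y) : ∀ᵐ x ∂μ.prod ν, p x.2 :=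
  Measure.quasiMeasurePreserving_snd.ae h

theorem integrable_conj_mul [IsFiniteMeasure μ] [SFinite ν] (v : Lp ℂ 2 ν)
    (g : Lp ℂ 2 (μ.prod ν)) :
    Integrable (fun x : X × Y => starRingEnd ℂ (v x.2) * g x) (μ.prod ν) :=
  ((Lp.memLp v).comp_snd μ).star.integrable_mul (Lp.memLp g)

theorem memLp_two_prod_mul {f : X → ℂ} {g : Y → ℂ} (hf : MemLp f 2 μ) (hg : MemLp g 2 ν) :
    MemLp (fun x : X × Y => f x.1 * g x.2) 2 (μ.prod ν) := by
  have hmeas : AEStronglyMeasurable (fun x : X × Y => f x.1 * g x.2) (μ.prod ν) :=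
    hf.1.comp_fst.mul hg.1.comp_snd
  rw [memLp_two_iff_integrable_sq_norm hmeas]
  simpa [mul_pow] using ((memLp_two_iff_integrable_sq_norm hf.1).1 hf).mul_prod
    ((memLp_two_iff_integrable_sq_norm hg.1).1 hg)

/-- The function `(x, y) ↦ f x * g y` as an element of `L²`; see `tensorL` for the bundled map. -/
def tensor (f : Lp ℂ 2 μ) (g : Lp ℂ 2 ν) : Lp ℂ 2 (μ.prod ν) :=
  (memLp_two_prod_mul (Lp.memLp f) (Lp.memLp g)).toLp

theorem coeFn_tensor (f : Lp ℂ 2 μ) (g : Lp ℂ 2 ν) :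
    tensor f g =ᵐ[μ.prod ν] fun x => f x.1 * g x.2 :=
  MemLp.coeFn_toLp _

variable [SFinite μ] [SFinite ν]

theorem inner_tensor (f f' : Lp ℂ 2 μ) (g g' : Lp ℂ 2 ν) :
    inner ℂ (tensor f g) (tensor f' g') = inner ℂ f f' * inner ℂ g g' := by
  simp only [L2.inner_def, ← integral_prod_mul]
  refine integral_congr_ae ?_
  filter_upwards [coeFn_tensor f g, coeFn_tensor f' g'] with x hx hx'
  simp only [hx, hx', RCLike.inner_apply, map_mul]
  ring

theorem norm_tensor (f : Lp ℂ 2 μ) (g : Lp ℂ 2 ν) : ‖tensor f g‖ = ‖f‖ * ‖g‖ := by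
  have h := inner_tensor f f g g
  simp only [inner_self_eq_norm_sq_to_K] at h
  refine (sq_eq_sq₀ (norm_nonneg _) (by positivity)).1 ?_
  rw [mul_pow]
  exact_mod_cast h

/-- The tensor product as a continuous bilinear map `L²(μ) × L²(ν) → L²(μ × ν)`. -/
def tensorL : Lp ℂ 2 μ →L[ℂ] Lp ℂ 2 ν →L[ℂ] Lp ℂ 2 (μ.prod ν) :=
  LinearMap.mkContinuous₂
    (LinearMap.mk₂ ℂ tensor
      (fun f f' g => Lp.ext <| by
        filter_upwards [coeFn_tensor (f + f') g, coeFn_tensor f g, coeFn_tensor f' g,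
          Lp.coeFn_add (tensor f g) (tensor f' g), ae_fst (Lp.coeFn_add f f')] with x h₁ h₂ h₃ h₄ h₅
        simp only [h₁, h₂, h₃, h₄, h₅, Pi.add_apply, add_mul])
      (fun c f g => Lp.ext <| by
        filter_upwards [coeFn_tensor (c • f) g, coeFn_tensor f g, Lp.coeFn_smul c (tensor f g),
          ae_fst (Lp.coeFn_smul c f)] with x h₁ h₂ h₃ h₄
        simp only [h₁, h₂, h₃, h₄, Pi.smul_apply, smul_mul_assoc])
      (fun f g g' => Lp.ext <| by
        filter_upwards [coeFn_tensor f (g + g'), coeFn_tensor f g, coeFn_tensor f g',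
          Lp.coeFn_add (tensor f g) (tensor f g'), ae_snd (Lp.coeFn_add g g')] with x h₁ h₂ h₃ h₄ h₅
        simp only [h₁, h₂, h₃, h₄, h₅, Pi.add_apply, mul_add])
      (fun c f g => Lp.ext <| by
        filter_upwards [coeFn_tensor f (c • g), coeFn_tensor f g, Lp.coeFn_smul c (tensor f g),
          ae_snd (Lp.coeFn_smul c g)] with x h₁ h₂ h₃ h₄
        simp only [h₁, h₂, h₃, h₄, Pi.smul_apply, mul_smul_comm]))
    1 fun f g => by simp [norm_tensor]

theorem tensorL_apply (f : Lp ℂ 2 μ) (g : Lp ℂ 2 ν) : tensorL f g = tensor f g := rfl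

theorem adjoint_tensorL_flip_tensor (v ψ : Lp ℂ 2 ν) (φ : Lp ℂ 2 μ) :
    (tensorL.flip v).adjoint (tensor φ ψ) = inner ℂ v ψ • φ :=
  ext_inner_left ℂ fun f => by
    rw [ContinuousLinearMap.adjoint_inner_right, ContinuousLinearMap.flip_apply, tensorL_apply,
      inner_tensor, inner_smul_right, mul_comm]

theorem tendsto_adjoint_tensorL_flip_tensor {f : ℕ → Lp ℂ 2 μ} {g : ℕ → Lp ℂ 2 ν}
    (hf : ∀ n, ‖f n‖ = 1) (hg : WeaklyNull g) (v : Lp ℂ 2 ν) :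
    Tendsto (fun n => (tensorL.flip v).adjoint (tensor (f n) (g n))) atTop (𝓝 0) := by
  rw [tendsto_zero_iff_norm_tendsto_zero]
  simpa [adjoint_tensorL_flip_tensor, norm_smul, hf] using (hg v).norm

end Tensor

section FiberIntegral

variable {X Y : Type*} [MeasurableSpace X] [MeasurableSpace Y] {μ : Measure X} {ν : Measure Y}
  [IsFiniteMeasure μ] [SFinite ν]

theorem coeFn_adjoint_tensorL_flip (v : Lp ℂ 2 ν) (g : Lp ℂ 2 (μ.prod ν)) :
    (tensorL.flip v).adjoint g =ᵐ[μ] fun x => ∫ y, starRingEnd ℂ (v y) * g (x, y) ∂ν := by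
  have hvg := integrable_conj_mul v g
  refine Integrable.ae_eq_of_forall_setIntegral_eq _ _
    ((Lp.memLp _).integrable one_le_two) hvg.integral_prod_left
    fun s hs hμs => ?_
  rw [← L2.inner_indicatorConstLp_one (𝕜 := ℂ) hs hμs.ne, ContinuousLinearMap.adjoint_inner_right,
    ContinuousLinearMap.flip_apply, tensorL_apply, L2.inner_def]
  have hindicator : (fun x => inner ℂ (tensor (indicatorConstLp 2 hs hμs.ne 1) v x) (g x))
      =ᵐ[μ.prod ν] (s ×ˢ univ).indicator fun x => starRingEnd ℂ (v x.2) * g x := by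
    filter_upwards [coeFn_tensor (indicatorConstLp 2 hs hμs.ne (1 : ℂ)) v,
      ae_fst (indicatorConstLp_coeFn (p := 2) (hs := hs) (hμs := hμs.ne) (c := (1 : ℂ)))]
      with x hx hsx
    by_cases hxs : x.1 ∈ s <;> simp [hx, hsx, hxs, mul_comm]
  rw [integral_congr_ae hindicator, integral_indicator (hs.prod .univ),
    setIntegral_prod _ hvg.integrableOn]
  simp only [Measure.restrict_univ]

end FiberIntegral

section DominatedConvergence

variable {X : Type*} [TopologicalSpace X] [CompactSpace X] [MeasurableSpace X] [BorelSpace X]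
  {μ : Measure X} [IsFiniteMeasure μ]

theorem norm_sq_mulOp_apply (a : C(X, ℂ)) (f : Lp ℂ 2 μ) :
    ‖mulOp μ a f‖ ^ 2 = ∫ x, ‖a x * f x‖ ^ 2 ∂μ := by
  rw [← RCLike.ofReal_inj (K := ℂ), RCLike.ofReal_pow, ← inner_self_eq_norm_sq_to_K (𝕜 := ℂ),
    L2.inner_def, ← integral_ofReal]
  refine integral_congr_ae ?_
  filter_upwards [coeFn_mulOp a f] with x hx
  rw [hx, inner_self_eq_norm_sq_to_K, RCLike.ofReal_pow]

theorem tendsto_mulOp_apply_zero {a : ℕ → C(X, ℂ)} {C : ℝ} (hC : ∀ n x, ‖a n x‖ ≤ C)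
    (ha : ∀ x, Tendsto (fun n => a n x) atTop (𝓝 0)) (f : Lp ℂ 2 μ) :
    Tendsto (fun n => mulOp μ (a n) f) atTop (𝓝 0) := by
  have hsq : Tendsto (fun n => ‖mulOp μ (a n) f‖ ^ 2) atTop (𝓝 0) := by
    simp only [norm_sq_mulOp_apply]
    rw [← integral_zero X ℝ (μ := μ)]
    refine tendsto_integral_of_dominated_convergence (fun x => (C * ‖f x‖) ^ 2)
      (fun n => (((a n).continuous.aestronglyMeasurable.mul (Lp.memLp f).1).norm.pow 2))
      (by simpa only [mul_pow] using
        ((memLp_two_iff_integrable_sq_norm (Lp.memLp f).1).1 (Lp.memLp f)).const_mul (C ^ 2))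
      (fun n => .of_forall fun x => ?_) (.of_forall fun x => ?_)
    · rw [Real.norm_of_nonneg (sq_nonneg _), norm_mul]
      gcongr
      exact hC n x
    · simpa using ((ha x).mul_const (f x)).norm.pow 2
  rw [tendsto_zero_iff_norm_tendsto_zero]
  simpa using hsq.sqrt

end DominatedConvergence

section PartialInner

variable {X Y : Type*} [TopologicalSpace X] [CompactSpace X] [MeasurableSpace X] [BorelSpace X]
  [TopologicalSpace Y] [CompactSpace Y] [MeasurableSpace Y] [BorelSpace Y]
  {μ : Measure X} [IsFiniteMeasure μ] {ν : Measure Y} [IsFiniteMeasure ν]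

/-- The function `x ↦ ∫ conj (u y) * r (x, y) * ψ y ∂ν`. -/
def partialInner (u ψ : Lp ℂ 2 ν) (r : C(X × Y, ℂ)) : C(X, ℂ) where
  toFun x := inner ℂ u (mulOp ν (r.curry x) ψ)
  continuous_toFun := continuous_const.inner <|
    (continuous_mulOp.comp r.curry.continuous).clm_apply continuous_const

theorem adjoint_tensorL_flip_mulOp_tensor [SecondCountableTopologyEither X Y]
    (u ψ : Lp ℂ 2 ν) (φ : Lp ℂ 2 μ) (r : C(X × Y, ℂ)) :
    (tensorL.flip u).adjoint (mulOp (μ.prod ν) r (tensor φ ψ)) =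
      mulOp μ (partialInner u ψ r) φ := by
  refine Lp.ext ?_
  filter_upwards [coeFn_adjoint_tensorL_flip u (mulOp (μ.prod ν) r (tensor φ ψ)),
    coeFn_mulOp (partialInner u ψ r) φ, Measure.ae_ae_of_ae_prod (coeFn_tensor φ ψ),
    Measure.ae_ae_of_ae_prod (coeFn_mulOp r (tensor φ ψ))] with x hadj hmul htensor hr
  rw [hadj, hmul, partialInner, ContinuousMap.coe_mk, L2.inner_def, ← integral_mul_const]
  refine integral_congr_ae ?_
  filter_upwards [htensor, hr, coeFn_mulOp (r.curry x) ψ] with y hty hry hψy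
  rw [hry, hty, hψy, RCLike.inner_apply, ContinuousMap.curry_apply]
  ring

theorem isCompletelyContinuous_adjoint_tensorL_flip_mulOp_tensorL
    [SecondCountableTopologyEither X Y] (u : Lp ℂ 2 ν) (v : Lp ℂ 2 μ) (r : C(X × Y, ℂ)) :
    IsCompletelyContinuous ((tensorL.flip u).adjoint ∘L mulOp (μ.prod ν) r ∘L tensorL v) := by
  intro f hf
  obtain ⟨C, hC⟩ := hf.exists_norm_le
  obtain ⟨R, hR⟩ := isCompact_univ.exists_bound_of_continuousOn (f := fun x => mulOp ν (r.curry x))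
    (continuous_mulOp.comp r.curry.continuous).continuousOn
  simp only [ContinuousLinearMap.comp_apply, tensorL_apply, adjoint_tensorL_flip_mulOp_tensor]
  refine tendsto_mulOp_apply_zero (C := ‖u‖ * (R * C)) (fun n x => ?_)
    (fun x => hf.map (mulOp ν (r.curry x)) u) v
  calc ‖inner ℂ u (mulOp ν (r.curry x) (f n))‖
      ≤ ‖u‖ * ‖mulOp ν (r.curry x) (f n)‖ := norm_inner_le_norm _ _
    _ ≤ ‖u‖ * (R * C) := by
      gcongr
      exact (mulOp ν (r.curry x)).le_of_opNorm_le_of_le (hR x trivial) (hC n)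

end PartialInner

section ConcentrationTensor

variable {X Y : Type*} [TopologicalSpace X] [TopologicalSpace Y] [MeasurableSpace X]
  [MeasurableSpace Y] {μ : Measure X} {ν : Measure Y} [SFinite μ] [SFinite ν]

theorem ConcentratesAt.tensor {f : ℕ → Lp ℂ 2 μ} {g : ℕ → Lp ℂ 2 ν} {x₀ : X} {y₀ : Y}
    (hf : ConcentratesAt f x₀) (hg : ConcentratesAt g y₀) :
    ConcentratesAt (fun n => tensor (f n) (g n)) (x₀, y₀) where
  norm_eq_one n := by rw [norm_tensor, hf.norm_eq_one, hg.norm_eq_one, mul_one]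
  eventually_eq_zero W hW := by
    obtain ⟨U, hU, V, hV, hUV⟩ := mem_nhds_prod_iff.1 hW
    filter_upwards [hf.eventually_eq_zero U hU, hg.eventually_eq_zero V hV] with n hfn hgn
    filter_upwards [coeFn_tensor (f n) (g n), ae_fst hfn, ae_snd hgn] with x hx hfx hgx hxW
    rw [hx]
    by_cases hxU : x.1 ∈ U
    · rw [hgx fun hxV => hxW (hUV ⟨hxU, hxV⟩), mul_zero]
    · rw [hfx hxU, zero_mul]

end ConcentrationTensor

/-! ### The channel operator -/

section Channel

variable {X : Type*} [TopologicalSpace X] [CompactSpace X]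
  [MeasurableSpace X] [BorelSpace X] {μ : Measure X} [IsFiniteMeasure μ]

/-- The Fredholm determinant at zero energy of the fibre of `channelOp m v w` over `k`. -/
def fredholmDet (m : C(X, ℂ)) (v : Lp ℂ 2 μ) (w : C(X × X, ℂ)) (k : X) : ℂ :=
  m k - 1 / 2 * ∫ t, (‖v t‖ : ℂ) ^ 2 / w (k, t) ∂μ

variable {m : C(X, ℂ)} {v : Lp ℂ 2 μ} {w : C(X × X, ℂ)}

theorem partialInner_units_inv (w : C(X × X, ℂ)ˣ) (k : X) :
    partialInner v v (↑w⁻¹) k = ∫ t, (‖v t‖ : ℂ) ^ 2 / (w : C(X × X, ℂ)) (k, t) ∂μ := by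
  rw [partialInner, ContinuousMap.coe_mk, L2.inner_def]
  refine integral_congr_ae ?_
  filter_upwards [coeFn_mulOp ((↑w⁻¹ : C(X × X, ℂ)).curry k) v] with t ht
  rw [ht, ContinuousMap.curry_apply, units_inv_apply, RCLike.inner_apply, mul_assoc,
    Complex.mul_conj', div_eq_inv_mul]

theorem coe_sub_half_smul_partialInner (w : C(X × X, ℂ)ˣ) :
    ⇑(m - (1 / 2 : ℂ) • partialInner v v (↑w⁻¹ : C(X × X, ℂ))) = fredholmDet m v ↑w := by
  ext k
  simp [fredholmDet, partialInner_units_inv]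

variable [SecondCountableTopology X]

/-- The channel operator on `L²(X) ⊕ L²(X × X)` with one-particle symbol `m`, two-particle symbol
`w` and interaction `v`. -/
def channelOp (m : C(X, ℂ)) (v : Lp ℂ 2 μ) (w : C(X × X, ℂ)) :
    WithLp 2 (Lp ℂ 2 μ × Lp ℂ 2 (μ.prod μ)) →L[ℂ] WithLp 2 (Lp ℂ 2 μ × Lp ℂ 2 (μ.prod μ)) :=
  blockOp (mulOp μ m) ((√2 : ℂ)⁻¹ • (tensorL.flip v).adjoint) ((√2 : ℂ)⁻¹ • tensorL.flip v)
    (mulOp (μ.prod μ) w)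

theorem channelOp_sub_algebraMap (z : ℂ) : channelOp m v w - algebraMap ℂ _ z =
    channelOp (m - algebraMap ℂ _ z) v (w - algebraMap ℂ _ z) := by
  simp only [channelOp, blockOp_sub_algebraMap, map_sub, AlgHom.commutes]

theorem channelOp_schur (w : C(X × X, ℂ)ˣ) :
    mulOp μ m - ((√2 : ℂ)⁻¹ • (tensorL.flip v).adjoint) ∘L
        mulOp (μ.prod μ) ↑w⁻¹ ∘L ((√2 : ℂ)⁻¹ • tensorL.flip v) =
      mulOp μ (m - (1 / 2 : ℂ) • partialInner v v ↑w⁻¹) := by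
  have hsqrt : (√2 : ℂ)⁻¹ * (√2 : ℂ)⁻¹ = 1 / 2 := by
    rw [← mul_inv, ← ofReal_mul, Real.mul_self_sqrt zero_le_two, ofReal_ofNat, one_div]
  ext1 φ
  simp [adjoint_tensorL_flip_mulOp_tensor, tensorL_apply, smul_smul, hsqrt]

theorem isUnit_channelOp_of_fredholmDet_ne_zero {w : C(X × X, ℂ)ˣ}
    (h : ∀ k, fredholmDet m v ↑w k ≠ 0) : IsUnit (channelOp m v ↑w) := by
  refine isUnit_blockOp_of_schur (D := Units.map (mulOp (μ.prod μ)).toMonoidHom w) ?_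
  rw [← coe_sub_half_smul_partialInner] at h
  exact (congrArg IsUnit (channelOp_schur w)).mpr (isUnit_mulOp h)

variable [TopologicalSpace.PseudoMetrizableSpace X] [μ.IsOpenPosMeasure] [NullSingletonClass μ]

theorem isUpperSemiFredholm_channelOp_iff {w : C(X × X, ℂ)ˣ} :
    IsUpperSemiFredholm (channelOp m v ↑w) ↔ ∀ k, fredholmDet m v ↑w k ≠ 0 := by
  rw [← coe_sub_half_smul_partialInner, ← isUpperSemiFredholm_mulOp_iff (μ := μ),
    ← channelOp_schur (μ := μ)]
  exact isUpperSemiFredholm_blockOp_iff_schur (D := Units.map (mulOp (μ.prod μ)).toMonoidHom w)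

theorem not_isUpperSemiFredholm_channelOp {x₀ : X × X} (hw : w x₀ = 0) :
    ¬IsUpperSemiFredholm (channelOp m v w) := by
  obtain ⟨f, hf⟩ := exists_concentratesAt (μ := μ) x₀.1
  obtain ⟨g, hg⟩ := exists_concentratesAt (μ := μ) x₀.2
  have hfg := hf.tensor hg
  refine not_isUpperSemiFredholm_blockOp (hfg.weaklyNull (measure_singleton _)) ?_
    (hfg.tendsto_mulOp hw) hfg.not_tendsto_zero
  simpa using (tendsto_adjoint_tensorL_flip_tensor hf.norm_eq_one
    (hg.weaklyNull (measure_singleton _)) v).const_smul (√2 : ℂ)⁻¹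

theorem isUnit_channelOp_iff :
    IsUnit (channelOp m v w) ↔ (∀ x, w x ≠ 0) ∧ ∀ k, fredholmDet m v w k ≠ 0 := by
  refine ⟨fun h => ?_, fun ⟨hw, h⟩ => ?_⟩
  · have hSF := isUpperSemiFredholm_of_isUnit h
    have hw : ∀ x, w x ≠ 0 := fun x hx => not_isUpperSemiFredholm_channelOp hx hSF
    obtain ⟨w, rfl⟩ := (ContinuousMap.isUnit_iff_forall_ne_zero w).2 hw
    exact ⟨hw, isUpperSemiFredholm_channelOp_iff.1 hSF⟩
  · obtain ⟨w, rfl⟩ := (ContinuousMap.isUnit_iff_forall_ne_zero w).2 hw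
    exact isUnit_channelOp_of_fredholmDet_ne_zero h

theorem mem_spectrum_channelOp_iff {z : ℂ} :
    z ∈ spectrum ℂ (channelOp m v w) ↔ (∃ x, w x = z) ∨
      ∃ k, fredholmDet (m - algebraMap ℂ _ z) v (w - algebraMap ℂ _ z) k = 0 := by
  rw [spectrum.mem_iff, IsUnit.sub_iff, channelOp_sub_algebraMap, isUnit_channelOp_iff]
  simp only [not_and_or, not_forall, not_not, ContinuousMap.sub_apply, sub_eq_zero]
  rfl

end Channel

/-! ### The truncated two-body Hamiltonian -/

section Hamiltonian

instance : NullSingletonClass (volume : Measure (AddCircle (2 * Real.pi))) where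
  measure_singleton x := by
    rw [← Metric.closedBall_zero, AddCircle.volume_closedBall]
    simp [Real.pi_pos.le]

instance (d : ℕ) :
    (Measure.prod (volume : Measure (Td d)) (volume : Measure (Td d))).WeaklyRegular :=
  .of_pseudoMetrizableSpace_of_isFiniteMeasure _

theorem mem_symSub_iff {g : L2two d} : g ∈ symSub d ↔ swapL d g = g := by
  rw [symSub, LinearMap.mem_ker, LinearMap.sub_apply, LinearMap.id_apply, sub_eq_zero]

theorem coeFn_swapL (g : L2two d) : swapL d g =ᵐ[volume] fun x => g x.swap :=
  Lp.coeFn_compMeasurePreserving g Measure.measurePreserving_swap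

theorem swapL_tensor (f g : L2 d) : swapL d (tensor f g) = tensor g f := by
  refine Lp.ext ?_
  filter_upwards [coeFn_swapL (tensor f g), coeFn_tensor g f,
    Measure.measurePreserving_swap.quasiMeasurePreserving.ae (coeFn_tensor f g)] with x hx hgf hfg
  rw [hx, hgf, hfg, Prod.fst_swap, Prod.snd_swap, mul_comm]

theorem swapL_mulOp {w : C(Td d × Td d, ℂ)} (hw : ∀ x, w x.swap = w x) (g : L2two d) :
    swapL d (mulOp (.prod volume volume) w g) = mulOp (.prod volume volume) w (swapL d g) := by
  refine Lp.ext ?_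
  have hmul (g : L2two d) := coeFn_mulOp (μ := .prod volume volume) w g
  filter_upwards [coeFn_swapL (mulOp (.prod volume volume) w g), hmul (swapL d g), coeFn_swapL g,
    Measure.measurePreserving_swap.quasiMeasurePreserving.ae (hmul g)] with x hx hw' hg hwg
  rw [hx, hw', hg, hwg, hw]

/-- Multiplication by a symmetric function on `L²_sym`. -/
def symMulOp (w : C(Td d × Td d, ℂ)) (hw : ∀ x, w x.swap = w x) : L2sym d →L[ℂ] L2sym d :=
  (mulOp (.prod volume volume) w).restrict fun g hg => by
    rw [mem_symSub_iff] at hg ⊢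
    rw [swapL_mulOp hw, hg]

theorem coe_symMulOp {w : C(Td d × Td d, ℂ)} (hw : ∀ x, w x.swap = w x) (g : L2sym d) :
    (symMulOp w hw g : L2two d) = mulOp (.prod volume volume) w g := rfl

/-- Multiplication by a nowhere vanishing symmetric function, as an invertible operator on
`L²_sym`. -/
def symMulUnit (w : C(Td d × Td d, ℂ)ˣ) (hw : ∀ x, w.val x.swap = w.val x) :
    (L2sym d →L[ℂ] L2sym d)ˣ where
  val := symMulOp w hw
  inv := symMulOp ↑w⁻¹ fun x => by simp only [units_inv_apply, hw]
  val_inv := ContinuousLinearMap.ext fun g => Subtype.ext <|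
    DFunLike.congr_fun (w.map (mulOp (.prod volume volume)).toMonoidHom).mul_inv (g : L2two d)
  inv_val := ContinuousLinearMap.ext fun g => Subtype.ext <|
    DFunLike.congr_fun (w.map (mulOp (.prod volume volume)).toMonoidHom).inv_mul (g : L2two d)

/-- Symmetrised creation, `f ↦ ½ (v ⊗ f + f ⊗ v)`. -/
def creation (v : L2 d) : L2 d →L[ℂ] L2sym d :=
  ((1 / 2 : ℂ) • (tensorL v + tensorL.flip v)).codRestrict (symSub d) fun f => by
    rw [mem_symSub_iff, smul_apply, map_smul, add_apply, map_add, ContinuousLinearMap.flip_apply,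
      tensorL_apply, tensorL_apply, swapL_tensor, swapL_tensor, add_comm]

theorem coe_creation (v f : L2 d) :
    (creation v f : L2two d) = (1 / 2 : ℂ) • (tensor v f + tensor f v) := rfl

theorem half_le_norm_creation {f g : L2 d} (hf : ‖f‖ = 1) (hg : ‖g‖ = 1) :
    1 / 2 ≤ ‖creation f g‖ := by
  have hexchange : inner ℂ f g * inner ℂ g f = (‖inner ℂ f g‖ ^ 2 : ℝ) := by
    rw [← inner_conj_symm g, mul_conj', ofReal_pow]
  have hinner : inner ℂ (tensor f g) (creation f g : L2two d) =
      (1 / 2 * (1 + ‖inner ℂ f g‖ ^ 2) : ℝ) := by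
    rw [coe_creation, inner_smul_right, inner_add_right, inner_tensor, inner_tensor,
      inner_self_eq_norm_sq_to_K, inner_self_eq_norm_sq_to_K, hf, hg, hexchange]
    norm_num
  calc (1 / 2 : ℝ) ≤ 1 / 2 * (1 + ‖inner ℂ f g‖ ^ 2) := by linarith [sq_nonneg ‖inner ℂ f g‖]
    _ = ‖inner ℂ (tensor f g) (creation f g : L2two d)‖ := by
      rw [hinner, Complex.norm_of_nonneg (by positivity)]
    _ ≤ ‖tensor f g‖ * ‖creation f g‖ := norm_inner_le_norm _ _
    _ = ‖creation f g‖ := by rw [norm_tensor, hf, hg, one_mul, one_mul]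

theorem weaklyNull_creation {f g : ℕ → L2 d} (hfg : WeaklyNull fun n => tensor (f n) (g n))
    (hgf : WeaklyNull fun n => tensor (g n) (f n)) : WeaklyNull fun n => creation (f n) (g n) :=
  fun h => by
    simpa [Submodule.coe_inner, coe_creation, inner_smul_right, inner_add_right, mul_add] using
      ((hfg.add hgf) h).const_mul (1 / 2 : ℂ)

/-- The truncation of the Hamiltonian to `L² ⊕ L²_sym`, with one-particle symbol `m`, two-particle
symbol `w` and interaction `v`. -/
def pairOp (m : C(Td d, ℂ)) (v : L2 d) (w : C(Td d × Td d, ℂ)) (hw : ∀ x, w x.swap = w x) :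
    WithLp 2 (L2 d × L2sym d) →L[ℂ] WithLp 2 (L2 d × L2sym d) :=
  blockOp (mulOp volume m) ((tensorL.flip v).adjoint ∘L (symSub d).subtypeL) (creation v)
    (symMulOp w hw)

variable {m : C(Td d, ℂ)} {v : L2 d}

theorem pairOp_sub_algebraMap {w : C(Td d × Td d, ℂ)} {hw : ∀ x, w x.swap = w x} (z : ℂ) :
    pairOp m v w hw - algebraMap ℂ _ z = pairOp (m - algebraMap ℂ _ z) v (w - algebraMap ℂ _ z)
      fun x => by simp [hw x, Algebra.algebraMap_eq_smul_one] := by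
  have hD : symMulOp w hw - algebraMap ℂ _ z =
      symMulOp (w - algebraMap ℂ _ z) fun x => by simp [hw x, Algebra.algebraMap_eq_smul_one] :=
    ContinuousLinearMap.ext fun g => Subtype.ext <| by
      simp [coe_symMulOp, Algebra.algebraMap_eq_smul_one]
  simp only [pairOp, blockOp_sub_algebraMap, hD, map_sub, AlgHom.commutes]

-- The exchange term of the symmetrised creation operator is the completely continuous correction.
theorem pairOp_schur (w : C(Td d × Td d, ℂ)ˣ) (hw : ∀ x, w.val x.swap = w.val x) :
    mulOp volume m - ((tensorL.flip v).adjoint ∘L (symSub d).subtypeL) ∘L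
        (symMulUnit w hw)⁻¹.val ∘L creation v =
      mulOp volume (m - (1 / 2 : ℂ) • partialInner v v ↑w⁻¹) +
        (tensorL.flip v).adjoint ∘L mulOp (.prod volume volume) (-(1 / 2 : ℂ) • w⁻¹.val) ∘L
          tensorL v := by
  have hinv (g : L2sym d) :
      ((symMulUnit w hw)⁻¹.val g : L2two d) = mulOp (.prod volume volume) w⁻¹.val g := rfl
  ext1 φ
  simp only [sub_apply, add_apply, smul_apply, ContinuousLinearMap.comp_apply,
    Submodule.subtypeL_apply, hinv, coe_creation, map_add, map_sub, map_smul,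
    adjoint_tensorL_flip_mulOp_tensor, tensorL_apply]
  module

variable [Nonempty (Fin d)]

theorem isUpperSemiFredholm_pairOp_iff {w : C(Td d × Td d, ℂ)ˣ}
    {hw : ∀ x, w.val x.swap = w.val x} :
    IsUpperSemiFredholm (pairOp m v w hw) ↔ ∀ k, fredholmDet m v ↑w k ≠ 0 := by
  rw [← coe_sub_half_smul_partialInner, ← isUpperSemiFredholm_mulOp_iff (μ := volume),
    ← isUpperSemiFredholm_add_iff
      (isCompletelyContinuous_adjoint_tensorL_flip_mulOp_tensorL v v (-(1 / 2 : ℂ) • w⁻¹.val)),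
    ← pairOp_schur w hw]
  exact isUpperSemiFredholm_blockOp_iff_schur (D := symMulUnit w hw)

theorem not_isUpperSemiFredholm_pairOp {w : C(Td d × Td d, ℂ)} {hw : ∀ x, w x.swap = w x}
    {x₀ : Td d × Td d} (hx₀ : w x₀ = 0) : ¬IsUpperSemiFredholm (pairOp m v w hw) := by
  obtain ⟨f, hf⟩ := exists_concentratesAt (μ := (volume : Measure (Td d))) x₀.1
  obtain ⟨g, hg⟩ := exists_concentratesAt (μ := (volume : Measure (Td d))) x₀.2
  have hfg := hf.tensor hg
  have hgf := hg.tensor hf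
  refine not_isUpperSemiFredholm_blockOp (u := fun n => creation (f n) (g n))
    (weaklyNull_creation (hfg.weaklyNull (measure_singleton _))
      (hgf.weaklyNull (measure_singleton _))) ?_ ?_
    (fun h => ?_)
  · have hB₁ := tendsto_adjoint_tensorL_flip_tensor hf.norm_eq_one
      (hg.weaklyNull (measure_singleton _)) v
    have hB₂ := tendsto_adjoint_tensorL_flip_tensor hg.norm_eq_one
      (hf.weaklyNull (measure_singleton _)) v
    simpa [coe_creation] using (hB₁.add hB₂).const_smul (1 / 2 : ℂ)
  · have hD₁ := hfg.tendsto_mulOp hx₀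
    have hD₂ := hgf.tendsto_mulOp (a := w) ((hw x₀).trans hx₀)
    rw [tendsto_subtype_rng]
    simpa [coe_symMulOp, coe_creation] using (hD₁.add hD₂).const_smul (1 / 2 : ℂ)
  · have := ge_of_tendsto' h.norm fun n =>
      half_le_norm_creation (hf.norm_eq_one n) (hg.norm_eq_one n)
    norm_num at this

theorem isUpperSemiFredholm_pairOp_iff_isUnit_channelOp {w : C(Td d × Td d, ℂ)}
    {hw : ∀ x, w x.swap = w x} :
    IsUpperSemiFredholm (pairOp m v w hw) ↔ IsUnit (channelOp m v w) := by
  rw [isUnit_channelOp_iff]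
  refine ⟨fun h => ?_, fun ⟨hw0, h⟩ => ?_⟩
  · have hw0 : ∀ x, w x ≠ 0 := fun x hx => not_isUpperSemiFredholm_pairOp hx h
    obtain ⟨w, rfl⟩ := (ContinuousMap.isUnit_iff_forall_ne_zero w).2 hw0
    exact ⟨hw0, isUpperSemiFredholm_pairOp_iff.1 h⟩
  · obtain ⟨w, rfl⟩ := (ContinuousMap.isUnit_iff_forall_ne_zero w).2 hw0
    exact isUpperSemiFredholm_pairOp_iff.2 h

theorem essSpec_pairOp {w : C(Td d × Td d, ℂ)} (hw : ∀ x, w x.swap = w x) :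
    essSpec (pairOp m v w hw) = spectrum ℂ (channelOp m v w) := by
  ext z
  rw [mem_essSpec_iff, pairOp_sub_algebraMap, isUpperSemiFredholm_pairOp_iff_isUnit_channelOp,
    ← channelOp_sub_algebraMap, spectrum.mem_iff, IsUnit.sub_iff]

end Hamiltonian

/-! ### The operator matrices in terms of their symbols -/

section Symbols

/-- A continuous real function as an element of the algebra of complex symbols. -/
def ofRealSymbol {X : Type*} [TopologicalSpace X] {f : X → ℝ} (hf : Continuous f) : C(X, ℂ) :=
  ⟨fun x => f x, continuous_ofReal.comp hf⟩

theorem coeFn_adjoint_tensorL_flip_ofReal {X Y : Type*} [MeasurableSpace X] [MeasurableSpace Y]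
    {μ : Measure X} {ν : Measure Y} [IsFiniteMeasure μ] [SFinite ν] {v : Y → ℝ}
    (hv : MemLp v 2 ν) (g : Lp ℂ 2 (μ.prod ν)) :
    (tensorL.flip (MemLp.toLp _ hv.ofReal)).adjoint g =ᵐ[μ]
      fun x => ∫ y, (v y : ℂ) * g (x, y) ∂ν := by
  refine (coeFn_adjoint_tensorL_flip _ g).trans (.of_forall fun x => integral_congr_ae ?_)
  filter_upwards [MemLp.coeFn_toLp (hv.ofReal (K := ℂ))] with y hy
  rw [hy]
  exact congrArg (· * g (x, y)) (conj_ofReal _)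

variable {w₀ v₀ v₁ : Td d → ℝ} {w₁ : Td d → Td d → ℝ} {w₂ : Td d → Td d → Td d → ℝ}
  {K : Td d}

theorem ofRealSymbol_swap (hw₂ : Continuous fun x : Td d × Td d => w₂ K x.1 x.2)
    (hsym : ∀ p q, w₂ K p q = w₂ K q p) (x : Td d × Td d) :
    ofRealSymbol hw₂ x.swap = ofRealSymbol hw₂ x :=
  congrArg ofReal (hsym x.2 x.1)

theorem mem_bigBand_iff (hw₂ : Continuous fun x : Td d × Td d => w₂ K x.1 x.2) {z : ℂ} :
    z ∈ bigBand w₂ K ↔ ∃ x, ofRealSymbol hw₂ x = z := by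
  have hrange : range (fun x : Td d × Td d => w₂ K x.1 x.2) = Icc (mK w₂ K) (MK w₂ K) :=
    eq_Icc_of_connected_compact (isConnected_range hw₂) (isCompact_range hw₂)
  rw [bigBand, ← hrange, ← range_comp]
  rfl

theorem bandKk_subset_bigBand (hw₂ : Continuous fun x : Td d × Td d => w₂ K x.1 x.2) (k : Td d) :
    bandKk w₂ K k ⊆ bigBand w₂ K :=
  image_mono <| Icc_subset_Icc
    (le_ciInf fun q => ciInf_le (isCompact_range hw₂).bddBelow (k, q))
    (ciSup_le fun q => le_ciSup (isCompact_range hw₂).bddAbove (k, q))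

theorem mem_SigK_iff (hw₂ : Continuous fun x : Td d × Td d => w₂ K x.1 x.2) {z : ℂ} :
    z ∈ SigK v₁ w₁ w₂ K ↔
      (∃ x, ofRealSymbol hw₂ x = z) ∨ ∃ k, Delta v₁ w₁ w₂ K k z = 0 := by
  rw [← mem_bigBand_iff hw₂]
  exact or_congr_right' fun hz =>
    exists_congr fun k => and_iff_right fun hk => hz (bandKk_subset_bigBand hw₂ k hk)

theorem fredholmDet_ofRealSymbol (hv₁ : MemLp v₁ 2 volume) (hw₁ : Continuous (w₁ K))
    (hw₂ : Continuous fun x : Td d × Td d => w₂ K x.1 x.2) (k : Td d) (z : ℂ) :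
    fredholmDet (ofRealSymbol hw₁ - algebraMap ℂ _ z) (MemLp.toLp _ hv₁.ofReal)
      (ofRealSymbol hw₂ - algebraMap ℂ _ z) k = Delta v₁ w₁ w₂ K k z := by
  have hint : ∫ t, (‖MemLp.toLp _ (hv₁.ofReal (K := ℂ)) t‖ : ℂ) ^ 2 / ((w₂ K k t : ℂ) - z) =
      ∫ t, (v₁ t : ℂ) ^ 2 / ((w₂ K k t : ℂ) - z) := by
    refine integral_congr_ae ?_
    filter_upwards [MemLp.coeFn_toLp (hv₁.ofReal (K := ℂ))] with t ht
    rw [ht, RCLike.norm_ofReal, ← ofReal_pow, sq_abs, ofReal_pow]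
  simp only [fredholmDet, Delta, ← hint]
  rfl

theorem IsChannel.eq_channelOp {Hc : HchSp d →L[ℂ] HchSp d} (hHc : IsChannel v₁ w₁ w₂ K Hc)
    (hv₁ : MemLp v₁ 2 volume) (hw₁ : Continuous (w₁ K))
    (hw₂ : Continuous fun x : Td d × Td d => w₂ K x.1 x.2) :
    Hc = channelOp (ofRealSymbol hw₁) (MemLp.toLp _ hv₁.ofReal) (ofRealSymbol hw₂) := by
  set v : L2 d := MemLp.toLp _ hv₁.ofReal
  refine eq_of_fst_eq_of_snd_eq (fun f => Lp.ext ?_) (fun f => Lp.ext ?_)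
  · refine (hHc f).1.trans ?_
    let B := (tensorL.flip v).adjoint f.snd
    filter_upwards [coeFn_mulOp (ofRealSymbol hw₁) f.fst,
      coeFn_adjoint_tensorL_flip_ofReal hv₁ f.snd, Lp.coeFn_smul (√2 : ℂ)⁻¹ B,
      Lp.coeFn_add (mulOp volume (ofRealSymbol hw₁) f.fst) ((√2 : ℂ)⁻¹ • B)] with p hm hB hsB hadd
    refine .trans ?_ hadd.symm
    rw [Pi.add_apply, hm, hsB, Pi.smul_apply, hB]
    rfl
  · refine (hHc f).2.trans ?_
    let D := mulOp (.prod volume volume) (ofRealSymbol hw₂) f.snd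
    filter_upwards [coeFn_mulOp (μ := .prod volume volume) (ofRealSymbol hw₂) f.snd,
      coeFn_tensor f.fst v, ae_snd (MemLp.coeFn_toLp (hv₁.ofReal (K := ℂ))),
      Lp.coeFn_smul (√2 : ℂ)⁻¹ (tensor f.fst v),
      Lp.coeFn_add ((√2 : ℂ)⁻¹ • tensor f.fst v) D] with x hD hC hv hsC hadd
    refine .trans ?_ hadd.symm
    rw [Pi.add_apply, hD, hsC, Pi.smul_apply, hC, hv, smul_eq_mul, mul_comm (f.fst x.1),
      ← mul_assoc]
    rfl

theorem IsHamiltonian.sndCompression_eq_pairOp {H : H3 d →L[ℂ] H3 d}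
    (hH : IsHamiltonian w₀ v₀ v₁ w₁ w₂ K H) (hv₁ : MemLp v₁ 2 volume) (hw₁ : Continuous (w₁ K))
    (hw₂ : Continuous fun x : Td d × Td d => w₂ K x.1 x.2) (hsym : ∀ p q, w₂ K p q = w₂ K q p) :
    sndCompression H = pairOp (ofRealSymbol hw₁) (MemLp.toLp _ hv₁.ofReal) (ofRealSymbol hw₂)
      (ofRealSymbol_swap hw₂ hsym) := by
  set v : L2 d := MemLp.toLp _ hv₁.ofReal
  refine eq_of_fst_eq_of_snd_eq (fun f => Lp.ext ?_) (fun f => Subtype.ext <| Lp.ext ?_)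
  · refine (hH (WithLp.toLp 2 (0, f))).2.1.trans ?_
    filter_upwards [coeFn_mulOp (ofRealSymbol hw₁) f.fst,
      coeFn_adjoint_tensorL_flip_ofReal hv₁ (f.snd : L2two d),
      Lp.coeFn_add (mulOp volume (ofRealSymbol hw₁) f.fst)
        ((tensorL.flip v).adjoint (f.snd : L2two d))] with p hm hB hadd
    refine .trans ?_ hadd.symm
    rw [Pi.add_apply, hm, hB]
    change (v₀ p : ℂ) * 0 + _ + _ = _
    rw [mul_zero, zero_add]
    rfl
  · refine (hH (WithLp.toLp 2 (0, f))).2.2.trans ?_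
    have hv := MemLp.coeFn_toLp (hv₁.ofReal (K := ℂ))
    let D := mulOp (.prod volume volume) (ofRealSymbol hw₂) (f.snd : L2two d)
    let C := tensor v f.fst + tensor f.fst v
    filter_upwards [coeFn_mulOp (μ := .prod volume volume) (ofRealSymbol hw₂) (f.snd : L2two d),
      coeFn_tensor v f.fst, coeFn_tensor f.fst v, ae_fst hv, ae_snd hv,
      Lp.coeFn_add (tensor v f.fst) (tensor f.fst v), Lp.coeFn_smul (1 / 2 : ℂ) C,
      Lp.coeFn_add ((1 / 2 : ℂ) • C) D] with x hD hvf hfv hvp hvq hC hsC hadd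
    refine .trans ?_ hadd.symm
    rw [Pi.add_apply, hD, hsC, Pi.smul_apply, hC, Pi.add_apply, hvf, hfv, hvp, hvq, smul_eq_mul,
      mul_comm (f.fst x.1), one_div, inv_mul_eq_div]
    rfl

end Symbols

theorem essSpec_eq_channel_spectrum_eq_SigK_general {d : ℕ} [Nonempty (Fin d)]
    {w₀ v₀ v₁ : Td d → ℝ} {w₁ : Td d → Td d → ℝ} {w₂ : Td d → Td d → Td d → ℝ} {K : Td d}
    (hv₁ : MemLp v₁ 2 volume) (hw₁ : Continuous (w₁ K))
    (hw₂ : Continuous fun x : Td d × Td d => w₂ K x.1 x.2) (hsym : ∀ p q, w₂ K p q = w₂ K q p)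
    {H : H3 d →L[ℂ] H3 d} (hH : IsHamiltonian w₀ v₀ v₁ w₁ w₂ K H)
    {Hc : HchSp d →L[ℂ] HchSp d} (hHc : IsChannel v₁ w₁ w₂ K Hc) :
    essSpec H = spectrum ℂ Hc ∧ spectrum ℂ Hc = SigK v₁ w₁ w₂ K := by
  obtain rfl := hHc.eq_channelOp hv₁ hw₁ hw₂
  constructor
  · rw [← essSpec_sndCompression, hH.sndCompression_eq_pairOp hv₁ hw₁ hw₂ hsym]
    exact essSpec_pairOp _
  · ext z
    rw [mem_SigK_iff hw₂]
    exact mem_spectrum_channelOp_iff.trans <| or_congr_right <| exists_congr fun k =>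
      (fredholmDet_ofRealSymbol hv₁ hw₁ hw₂ k z).congr_left

/-- For every `K ∈ T^d`,
`σ_ess(H(K)) = σ(H_ch(K)) = Σ_K = [m_K, M_K] ∪ Λ_K`. -/
theorem essSpec_eq_channel_spectrum_eq_SigK
    (d : ℕ) (hd : 1 ≤ d)
    (w₀ v₀ v₁ : Td d → ℝ) (w₁ : Td d → Td d → ℝ) (w₂ : Td d → Td d → Td d → ℝ)
    (hw₀ : Continuous w₀) (hv₀ : Continuous v₀) (hv₁ : Continuous v₁)
    (hw₁ : Continuous fun x : Td d × Td d => w₁ x.1 x.2)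
    (hw₂ : Continuous fun x : Td d × Td d × Td d => w₂ x.1 x.2.1 x.2.2)
    (hsym : ∀ K p q : Td d, w₂ K p q = w₂ K q p)
    (K : Td d)
    (H : H3 d →L[ℂ] H3 d) (hH : IsHamiltonian w₀ v₀ v₁ w₁ w₂ K H)
    (Hc : HchSp d →L[ℂ] HchSp d) (hHc : IsChannel v₁ w₁ w₂ K Hc) :
    essSpec H = spectrum ℂ Hc ∧ spectrum ℂ Hc = SigK v₁ w₁ w₂ K := by
  have : Nonempty (Fin d) := ⟨⟨0, hd⟩⟩
  have hv₁_L2 : MemLp v₁ 2 volume :=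
    hv₁.memLp_of_hasCompactSupport (HasCompactSupport.of_compactSpace v₁)
  exact essSpec_eq_channel_spectrum_eq_SigK_general hv₁_L2 (hw₁.comp (.prodMk_right K))
    (hw₂.comp (.prodMk_right K)) (hsym K) hH hHc
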